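/- Let W : ℝ → ℝ be continuous, compactly supported, nonnegative, with ∫_ℝ W(x) dx = 1, let x₀ ∈ ℝ, and define W̃_ε(p) = (2π)^{-1/2} ∫_ℝ ε⁻¹ W((x − x₀)/ε) e^{−ipx} dx. Then for every t ∈ ℝ and every p ∈ ℝ, the integrals ∫_ℝ |φ_t(p,q)| · |(2π)^{-1/2} e^{−i(p−q)x₀} − W̃_ε(p−q)| dq converge to 0 as ε → 0⁺. -/

import Mathlib

/-!
Substituting `x = x₀ + ε y` shows `W̃_ε(p) = δ̃(p) · 𝓕W(ε p / 2π)`, where `δ̃` is the transform of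
the delta potential at `x₀`. Since `𝓕W` is continuous and bounded by `‖W‖₁`, `W̃_ε` converges
pointwise to `(∫ W) δ̃` and stays bounded uniformly in `ε`. The kernel `φ_t(p, ·)` is bounded by
`|t|` and decays like `q⁻²`, so it is integrable and dominated convergence applies.
-/

open MeasureTheory Filter Topology

/-- The first-order Dyson kernel factor:
`φ_t(p,q) = (e^{it(p²−q²)} − 1)/(i(p²−q²))` if `p² ≠ q²`, and `t` otherwise. -/
noncomputable def phiK (t p q : ℝ) : ℂ :=
  if p ^ 2 = q ^ 2 then (t : ℂ)
  else (Complex.exp (Complex.I * t * ((p : ℂ) ^ 2 - (q : ℂ) ^ 2)) - 1) /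
    (Complex.I * ((p : ℂ) ^ 2 - (q : ℂ) ^ 2))

/-- The Fourier transform (convention `ℱg(p) = (2π)^{-1/2} ∫ g(x) e^{-ipx} dx`)
of the shifted mollifier `x ↦ W_ε(x − x₀)`. -/
noncomputable def mollFT (W : ℝ → ℝ) (x₀ ε p : ℝ) : ℂ :=
  ((Real.sqrt (2 * Real.pi) : ℝ) : ℂ)⁻¹ *
    ∫ x : ℝ, ((ε⁻¹ * W ((x - x₀) / ε) : ℝ) : ℂ) * Complex.exp (-Complex.I * p * x)

section DominatedConvergence

variable {α ι E F : Type*} [MeasurableSpace α] {μ : Measure α} [NormedAddCommGroup E]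
  [NormedAddCommGroup F]

theorem tendsto_lintegral_enorm_mul_enorm_of_bounded {l : Filter ι} [l.IsCountablyGenerated]
    {f : α → E} (hf : Integrable f μ) {g : ι → α → F} (C : ℝ)
    (hg_meas : ∀ᶠ i in l, AEStronglyMeasurable (g i) μ)
    (hg_bound : ∀ᶠ i in l, ∀ᵐ a ∂μ, ‖g i a‖ ≤ C)
    (hg_lim : ∀ᵐ a ∂μ, Tendsto (fun i => g i a) l (𝓝 0)) :
    Tendsto (fun i => ∫⁻ a, ‖f a‖ₑ * ‖g i a‖ₑ ∂μ) l (𝓝 0) := by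
  rw [← lintegral_zero (μ := μ)]
  refine tendsto_lintegral_filter_of_dominated_convergence'
    (fun a => ‖f a‖ₑ * ENNReal.ofReal C) ?_ ?_ ?_ ?_
  · filter_upwards [hg_meas] with i hi using hf.1.enorm.mul hi.enorm
  · filter_upwards [hg_bound] with i hi
    filter_upwards [hi] with a ha
    gcongr
    rw [← ofReal_norm]
    exact ENNReal.ofReal_le_ofReal ha
  · rw [lintegral_mul_const'' _ hf.1.enorm]
    exact ENNReal.mul_ne_top hf.2.ne ENNReal.ofReal_ne_top
  · filter_upwards [hg_lim] with a ha
    simpa using ENNReal.Tendsto.const_mul ha.enorm (.inr enorm_ne_top)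

end DominatedConvergence

section Fourier

open scoped FourierTransform

variable {E : Type*} [NormedAddCommGroup E] [NormedSpace ℂ E]

theorem continuous_fourier_of_integrable {V : Type*} [NormedAddCommGroup V]
    [InnerProductSpace ℝ V] [MeasurableSpace V] [BorelSpace V] [FiniteDimensional ℝ V]
    {f : V → E} (hf : Integrable f) : Continuous (𝓕 f) :=
  VectorFourier.fourierIntegral_continuous Real.continuous_fourierChar continuous_inner hf

theorem fourier_comp_sub_div (f : ℝ → E) (a : ℝ) {c : ℝ} (hc : c ≠ 0) (ξ : ℝ) :
    𝓕 (fun x => f ((x - a) / c)) ξ = |c| • 𝐞 (-(a * ξ)) • 𝓕 f (c * ξ) := by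
  let g : ℝ → E := fun y => 𝐞 (-((a + c * y) * ξ)) • f y
  have char_smul_eq (x : ℝ) : 𝐞 (-(x * ξ)) • f ((x - a) / c) = g ((x - a) / c) := by
    simp only [g, mul_div_cancel₀ (x - a) hc, add_sub_cancel]
  have g_eq (y : ℝ) : g y = 𝐞 (-(a * ξ)) • 𝐞 (-(y * (c * ξ))) • f y := by
    rw [smul_smul, ← AddChar.map_add_eq_mul]
    simp only [g]
    ring_nf
  calc 𝓕 (fun x => f ((x - a) / c)) ξ
      = ∫ x, g ((x - a) / c) := by simp only [Real.fourier_real_eq, char_smul_eq]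
    _ = |c| • ∫ y, g y := by
      rw [integral_sub_right_eq_self (fun x => g (x / c)) a, Measure.integral_comp_div]
    _ = |c| • 𝐞 (-(a * ξ)) • 𝓕 f (c * ξ) := by
      simp only [g_eq, Circle.smul_def, integral_smul, Real.fourier_real_eq]

end Fourier

section Mollifier

open scoped FourierTransform

/-- The Fourier transform `p ↦ (2π)^{-1/2} e^{-ipx₀}` of the delta potential at `x₀`, in the
convention of `mollFT`. -/
noncomputable def deltaFT (x₀ p : ℝ) : ℂ :=
  ((Real.sqrt (2 * Real.pi) : ℝ) : ℂ)⁻¹ * Complex.exp (-Complex.I * p * x₀)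

theorem norm_deltaFT (x₀ p : ℝ) : ‖deltaFT x₀ p‖ = (Real.sqrt (2 * Real.pi))⁻¹ := by
  have exponent_eq : -Complex.I * p * x₀ = ((-(p * x₀) : ℝ) : ℂ) * Complex.I := by
    push_cast
    ring
  rw [deltaFT, exponent_eq, norm_mul, Complex.norm_exp_ofReal_mul_I, mul_one, norm_inv,
    Complex.norm_of_nonneg (Real.sqrt_nonneg _)]

theorem continuous_deltaFT (x₀ : ℝ) : Continuous (deltaFT x₀) := by
  unfold deltaFT
  fun_prop

-- The Mathlib transform `𝓕` uses the character `e^{-2πixξ}`, hence the frequency `p / (2π)`.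
theorem mollFT_eq_deltaFT_mul_fourier (W : ℝ → ℝ) (x₀ : ℝ) {ε : ℝ} (hε : 0 < ε) (p : ℝ) :
    mollFT W x₀ ε p = deltaFT x₀ p * 𝓕 (fun x => (W x : ℂ)) (ε * (p / (2 * Real.pi))) := by
  have integral_eq_fourier :
      ∫ x : ℝ, ((ε⁻¹ * W ((x - x₀) / ε) : ℝ) : ℂ) * Complex.exp (-Complex.I * p * x) =
        (ε⁻¹ : ℂ) * 𝓕 (fun x => (W ((x - x₀) / ε) : ℂ)) (p / (2 * Real.pi)) := by
    rw [Real.fourier_real_eq_integral_exp_smul, ← integral_const_mul]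
    congr 1 with x
    have exponent_eq : ((-2 * Real.pi * x * (p / (2 * Real.pi)) : ℝ) : ℂ) * Complex.I =
        -Complex.I * p * x := by
      push_cast
      field_simp
    rw [exponent_eq, smul_eq_mul]
    push_cast
    ring
  have char_eq : (𝐞 (-(x₀ * (p / (2 * Real.pi)))) : ℂ) = Complex.exp (-Complex.I * p * x₀) := by
    rw [Real.fourierChar_apply]
    push_cast
    congr 1
    field_simp
  rw [mollFT, integral_eq_fourier, fourier_comp_sub_div (fun x => (W x : ℂ)) x₀ hε.ne',
    abs_of_pos hε, Complex.real_smul, Circle.smul_def, char_eq, smul_eq_mul,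
    inv_mul_cancel_left₀ (Complex.ofReal_ne_zero.mpr hε.ne'), deltaFT, mul_assoc _ (Complex.exp _)]

theorem norm_mollFT_le (W : ℝ → ℝ) (x₀ : ℝ) {ε : ℝ} (hε : 0 < ε) (p : ℝ) :
    ‖mollFT W x₀ ε p‖ ≤ (Real.sqrt (2 * Real.pi))⁻¹ * ∫ x, |W x| := by
  rw [mollFT_eq_deltaFT_mul_fourier W x₀ hε, norm_mul, norm_deltaFT]
  gcongr
  simpa only [Complex.norm_real, Real.norm_eq_abs] using!
    VectorFourier.norm_fourierIntegral_le_integral_norm 𝐞 volume (innerₗ ℝ)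
      (fun x => (W x : ℂ)) (ε * (p / (2 * Real.pi)))

theorem norm_deltaFT_mul_integral_sub_mollFT_le (W : ℝ → ℝ) (x₀ : ℝ) {ε : ℝ} (hε : 0 < ε)
    (p : ℝ) :
    ‖deltaFT x₀ p * ((∫ x, W x : ℝ) : ℂ) - mollFT W x₀ ε p‖ ≤
      2 * ((Real.sqrt (2 * Real.pi))⁻¹ * ∫ x, |W x|) := by
  rw [two_mul]
  refine norm_sub_le_of_le ?_ (norm_mollFT_le W x₀ hε p)
  rw [norm_mul, norm_deltaFT, Complex.norm_real]
  gcongr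
  exact norm_integral_le_integral_norm W

variable {W : ℝ → ℝ}

theorem continuous_mollFT (hW : Integrable W) (x₀ : ℝ) {ε : ℝ} (hε : 0 < ε) :
    Continuous (mollFT W x₀ ε) := by
  rw [funext (mollFT_eq_deltaFT_mul_fourier W x₀ hε)]
  exact (continuous_deltaFT x₀).mul
    ((continuous_fourier_of_integrable hW.ofReal).comp (by fun_prop))

theorem tendsto_mollFT (hW : Integrable W) (x₀ p : ℝ) :
    Tendsto (fun ε => mollFT W x₀ ε p) (𝓝[>] 0)
      (𝓝 (deltaFT x₀ p * ((∫ x, W x : ℝ) : ℂ))) := by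
  have fourier_zero : 𝓕 (fun x => (W x : ℂ)) (0 * (p / (2 * Real.pi))) =
      ((∫ x, W x : ℝ) : ℂ) := by
    simp [Real.fourier_real_eq, integral_complex_ofReal]
  have fourier_continuous :
      Continuous fun ε => 𝓕 (fun x => (W x : ℂ)) (ε * (p / (2 * Real.pi))) :=
    (continuous_fourier_of_integrable hW.ofReal).comp (by fun_prop)
  rw [← fourier_zero]
  refine (((fourier_continuous.tendsto 0).mono_left nhdsWithin_le_nhds).const_mul
    (deltaFT x₀ p)).congr' ?_
  filter_upwards [self_mem_nhdsWithin] with ε hε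
  exact (mollFT_eq_deltaFT_mul_fourier W x₀ hε p).symm

end Mollifier

theorem norm_phiK_of_sq_ne_sq (t : ℝ) {p q : ℝ} (h : p ^ 2 ≠ q ^ 2) :
    ‖phiK t p q‖ =
      ‖Complex.exp (Complex.I * ((t * (p ^ 2 - q ^ 2) : ℝ) : ℂ)) - 1‖ / |p ^ 2 - q ^ 2| := by
  have denom_norm : ‖Complex.I * ((p : ℂ) ^ 2 - (q : ℂ) ^ 2)‖ = |p ^ 2 - q ^ 2| := by
    rw [norm_mul, Complex.norm_I, one_mul, ← Real.norm_eq_abs, ← Complex.norm_real]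
    push_cast
    rfl
  rw [phiK, if_neg h, norm_div, denom_norm]
  push_cast
  rw [mul_assoc]

theorem norm_phiK_le_abs (t p q : ℝ) : ‖phiK t p q‖ ≤ |t| := by
  rcases eq_or_ne (p ^ 2) (q ^ 2) with h | h
  · simp [phiK, h]
  · rw [norm_phiK_of_sq_ne_sq t h, div_le_iff₀ (abs_pos.mpr (sub_ne_zero.mpr h)), ← abs_mul]
    exact Real.norm_exp_I_mul_ofReal_sub_one_le

theorem norm_phiK_mul_abs_sub_le_two (t p q : ℝ) : ‖phiK t p q‖ * |p ^ 2 - q ^ 2| ≤ 2 := by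
  rcases eq_or_ne (p ^ 2) (q ^ 2) with h | h
  · simp [h]
  · rw [norm_phiK_of_sq_ne_sq t h, div_mul_cancel₀ _ (abs_ne_zero.mpr (sub_ne_zero.mpr h))]
    refine (norm_sub_le _ _).trans_eq ?_
    rw [Complex.norm_exp_I_mul_ofReal, norm_one, one_add_one_eq_two]

theorem norm_phiK_le_mul_inv_one_add_sq (t p q : ℝ) :
    ‖phiK t p q‖ ≤ (|t| * (1 + p ^ 2) + 2) * (1 + q ^ 2)⁻¹ := by
  rw [← div_eq_mul_inv, le_div_iff₀ (by positivity)]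
  calc ‖phiK t p q‖ * (1 + q ^ 2)
      ≤ ‖phiK t p q‖ * (1 + p ^ 2 + |p ^ 2 - q ^ 2|) := by
        refine mul_le_mul_of_nonneg_left ?_ (norm_nonneg _)
        linarith [neg_abs_le (p ^ 2 - q ^ 2)]
    _ = ‖phiK t p q‖ * (1 + p ^ 2) + ‖phiK t p q‖ * |p ^ 2 - q ^ 2| := mul_add _ _ _
    _ ≤ |t| * (1 + p ^ 2) + 2 := by
        gcongr
        exacts [norm_phiK_le_abs t p q, norm_phiK_mul_abs_sub_le_two t p q]

theorem measurable_phiK (t p : ℝ) : Measurable (phiK t p) :=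
  Measurable.ite (measurableSet_eq_fun (by fun_prop) (by fun_prop)) measurable_const
    (by fun_prop)

theorem integrable_phiK (t p : ℝ) : Integrable (phiK t p) :=
  (integrable_inv_one_add_sq.const_mul _).mono' (measurable_phiK t p).aestronglyMeasurable
    (ae_of_all _ (norm_phiK_le_mul_inv_one_add_sq t p))

theorem firstKernel_L1_tendsto_general {W : ℝ → ℝ} (hW : Integrable W) (x₀ t p : ℝ) :
    Tendsto
      (fun ε : ℝ => ∫⁻ q : ℝ, ‖phiK t p q‖ₑ *
        ‖deltaFT x₀ (p - q) * ((∫ x, W x : ℝ) : ℂ) - mollFT W x₀ ε (p - q)‖ₑ)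
      (𝓝[>] 0) (𝓝 0) := by
  refine tendsto_lintegral_enorm_mul_enorm_of_bounded (integrable_phiK t p)
    (2 * ((Real.sqrt (2 * Real.pi))⁻¹ * ∫ x, |W x|)) ?_ ?_ ?_
  · filter_upwards [self_mem_nhdsWithin] with ε hε
    have delta_continuous := continuous_deltaFT x₀
    have moll_continuous := continuous_mollFT hW x₀ hε
    exact Continuous.aestronglyMeasurable (by fun_prop)
  · filter_upwards [self_mem_nhdsWithin] with ε hε
    exact ae_of_all _ fun q => norm_deltaFT_mul_integral_sub_mollFT_le W x₀ hε (p - q)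
  · exact ae_of_all _ fun q => by
      simpa only [sub_self] using (tendsto_mollFT hW x₀ (p - q)).const_sub
        (deltaFT x₀ (p - q) * ((∫ x, W x : ℝ) : ℂ))

/-- Base case `k = 1` of the induction in the proof of Theorem 3.1:
`∫ |φ_t(p,q)| · |(2π)^{-1/2} e^{-i(p-q)x₀} − W̃_ε(p−q)| dq → 0` as `ε → 0⁺`. -/
theorem firstKernel_L1_tendsto (W : ℝ → ℝ) (hWc : Continuous W)
    (hWs : HasCompactSupport W) (hWnn : ∀ x, 0 ≤ W x) (hWint : (∫ x : ℝ, W x) = 1)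
    (x₀ : ℝ) :
    ∀ t p : ℝ, Tendsto
      (fun ε : ℝ => ∫⁻ q : ℝ, (‖phiK t p q‖₊ : ENNReal) *
        (‖((Real.sqrt (2 * Real.pi) : ℝ) : ℂ)⁻¹ *
            Complex.exp (-Complex.I * (p - q) * x₀) - mollFT W x₀ ε (p - q)‖₊ : ENNReal))
      (𝓝[>] 0) (𝓝 0) := by
  simpa [hWint, deltaFT, enorm_eq_nnnorm] using
    firstKernel_L1_tendsto_general (hWc.integrable_of_hasCompactSupport hWs) x₀
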